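/- Let X and Y be metric spaces, F : X ⇉ Y a set-valued mapping, (x̄,ȳ) ∈ gph F, and φ : [0,∞) → [0,∞) continuously differentiable with φ(0)=0 and φ'(t)>0 for all t≥0. Then for every ρ>0 and every (x,y) ∈ gph F with y ≠ ȳ, the nonlocal (φ,ρ)-slope satisfies |∇F|_{φ,ρ}^◇(x,y) ≥ max{ φ'(d(y,ȳ))·|∇F|_ρ(x,y), φ(d(y,ȳ))/d_ρ((x,y),(x̄,ȳ)) }. -/

import Mathlib

open Filter Metric Set Topology ENNReal

/-- The parametric metric `d_ρ((x,y),(u,v)) = max{d(x,u), ρ·d(y,v)}` on a product. -/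
noncomputable def dRho {X Y : Type*} [MetricSpace X] [MetricSpace Y]
    (ρ : ℝ) (p q : X × Y) : ℝ :=
  max (dist p.1 q.1) (ρ * dist p.2 q.2)

/-- The graph of a set-valued mapping `F : X ⇉ Y`. -/
def svGraph {X Y : Type*} (F : X → Set Y) : Set (X × Y) := {p : X × Y | p.2 ∈ F p.1}

/-- The ρ-slope `|∇F|_ρ(x,y)` of `F` at `p = (x,y) ∈ gph F`. -/
noncomputable def slopeRhoF {X Y : Type*} [MetricSpace X] [MetricSpace Y]
    (F : X → Set Y) (ybar : Y) (ρ : ℝ) (p : X × Y) : ℝ≥0∞ :=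
  Filter.limsup
    (fun q => ENNReal.ofReal (max (dist p.2 ybar - dist q.2 ybar) 0) /
      ENNReal.ofReal (dRho ρ q p))
    (𝓝[svGraph F \ {p}] p)

/-- The nonlocal (φ,ρ)-slope `|∇F|_{φ,ρ}^◇(x,y)` of `F` at `p = (x,y) ∈ gph F`. -/
noncomputable def nonlocalPhiSlopeRho {X Y : Type*} [MetricSpace X] [MetricSpace Y]
    (F : X → Set Y) (φ : ℝ → ℝ) (ybar : Y) (ρ : ℝ) (p : X × Y) : ℝ≥0∞ :=
  ⨆ (q : X × Y) (_ : q ∈ svGraph F ∧ q ≠ p),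
    ENNReal.ofReal (φ (dist p.2 ybar) - φ (dist q.2 ybar)) / ENNReal.ofReal (dRho ρ q p)

/-!
Near `t = d(y, ȳ)`, a left derivative `c` of `φ` gives `r * (t - s) < φ t - φ s` for every `r < c`
and every `s < t` close to `t`. Dividing by `d_ρ` and passing to the limsup over the graph bounds
`c * |∇F|_ρ` by the limsup of the `φ`-quotients, hence by their supremum. The second bound is the
quotient at the competitor `(x̄, ȳ)`.
-/

section LeftDerivative

variable {φ : ℝ → ℝ} {c t : ℝ}

lemma eventually_mul_sub_lt_of_lt_leftDeriv {r : ℝ} (hφ : HasDerivWithinAt φ c (Iio t) t)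
    (hr : r < c) : ∀ᶠ s in 𝓝[<] t, r * (t - s) < φ t - φ s := by
  have tendsto_slope : Tendsto (slope φ t) (𝓝[<] t) (𝓝 c) :=
    (hasDerivWithinAt_iff_tendsto_slope' self_notMem_Iio).mp hφ
  filter_upwards [tendsto_slope.eventually_const_lt hr, self_mem_nhdsWithin] with s hslope hst
  rw [slope_comm, slope_def_field] at hslope
  exact (lt_div_iff₀ (sub_pos.mpr hst)).mp hslope

lemma eventually_mul_ofReal_sub_le_of_lt_leftDeriv {r : NNReal}
    (hφ : HasDerivWithinAt φ c (Iio t) t) (hr : r < c) :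
    ∀ᶠ s in 𝓝 t, r * ENNReal.ofReal (t - s) ≤ ENNReal.ofReal (φ t - φ s) := by
  have hleft := eventually_nhdsWithin_iff.mp (eventually_mul_sub_lt_of_lt_leftDeriv hφ hr)
  filter_upwards [hleft] with s hs
  rcases lt_or_ge s t with hst | hts
  · rw [← ENNReal.ofReal_coe_nnreal, ← ENNReal.ofReal_mul r.coe_nonneg]
    exact ENNReal.ofReal_le_ofReal (hs hst).le
  · simp [ENNReal.ofReal_of_nonpos (sub_nonpos.mpr hts)]

lemma ofReal_leftDeriv_mul_limsup_le_limsup {α : Type*} {l : Filter α} {f : α → ℝ}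
    (hφ : HasDerivWithinAt φ c (Iio t) t) (hf : Tendsto f l (𝓝 t)) (δ : α → ℝ≥0∞) :
    ENNReal.ofReal c * limsup (fun q => ENNReal.ofReal (t - f q) / δ q) l ≤
      limsup (fun q => ENNReal.ofReal (φ t - φ (f q)) / δ q) l := by
  refine ENNReal.mul_le_of_forall_lt fun a ha b hb => ?_
  lift a to NNReal using ha.ne_top
  have hac : (a : ℝ) < c := by
    rwa [← ENNReal.ofReal_coe_nnreal, ENNReal.ofReal_lt_ofReal_iff_of_nonneg a.coe_nonneg] at ha
  calc (a : ℝ≥0∞) * b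
      ≤ a * limsup (fun q => ENNReal.ofReal (t - f q) / δ q) l := by gcongr
    _ = limsup (fun q => a * (ENNReal.ofReal (t - f q) / δ q)) l :=
        (ENNReal.limsup_const_mul_of_ne_top ENNReal.coe_ne_top).symm
    _ ≤ limsup (fun q => ENNReal.ofReal (φ t - φ (f q)) / δ q) l := by
        refine limsup_le_limsup ?_
        have hle := hf.eventually (eventually_mul_ofReal_sub_le_of_lt_leftDeriv hφ hac)
        filter_upwards [hle] with q hq
        rw [← mul_div_assoc]
        gcongr

end LeftDerivative

section Slopes

variable {X Y : Type*} [MetricSpace X] [MetricSpace Y]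

lemma dRho_comm (ρ : ℝ) (p q : X × Y) : dRho ρ p q = dRho ρ q p := by
  simp only [dRho, dist_comm]

variable {F : X → Set Y} {ybar : Y} {ρ : ℝ} {p : X × Y}

lemma slopeRhoF_eq_limsup_ofReal_sub : slopeRhoF F ybar ρ p =
    limsup (fun q => ENNReal.ofReal (dist p.2 ybar - dist q.2 ybar) / ENNReal.ofReal (dRho ρ q p))
      (𝓝[svGraph F \ {p}] p) := by
  simp only [slopeRhoF, ENNReal.ofReal_max, ENNReal.ofReal_zero, max_zero]

lemma ofReal_div_dRho_le_nonlocalPhiSlopeRho (φ : ℝ → ℝ) {q : X × Y} (hq : q ∈ svGraph F)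
    (hqp : q ≠ p) :
    ENNReal.ofReal (φ (dist p.2 ybar) - φ (dist q.2 ybar)) / ENNReal.ofReal (dRho ρ q p) ≤
      nonlocalPhiSlopeRho F φ ybar ρ p :=
  le_iSup₂_of_le q ⟨hq, hqp⟩ le_rfl

lemma limsup_le_nonlocalPhiSlopeRho (φ : ℝ → ℝ) :
    limsup (fun q => ENNReal.ofReal (φ (dist p.2 ybar) - φ (dist q.2 ybar)) /
      ENNReal.ofReal (dRho ρ q p)) (𝓝[svGraph F \ {p}] p) ≤ nonlocalPhiSlopeRho F φ ybar ρ p := by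
  refine limsup_le_of_le (h := ?_)
  filter_upwards [self_mem_nhdsWithin] with q hq
  exact ofReal_div_dRho_le_nonlocalPhiSlopeRho φ hq.1 hq.2

lemma ofReal_leftDeriv_mul_slopeRhoF_le_nonlocalPhiSlopeRho {φ : ℝ → ℝ} {c : ℝ}
    (hφ : HasDerivWithinAt φ c (Iio (dist p.2 ybar)) (dist p.2 ybar)) :
    ENNReal.ofReal c * slopeRhoF F ybar ρ p ≤ nonlocalPhiSlopeRho F φ ybar ρ p := by
  have tendsto_dist : Tendsto (fun q : X × Y => dist q.2 ybar) (𝓝[svGraph F \ {p}] p)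
      (𝓝 (dist p.2 ybar)) :=
    (continuous_snd.dist continuous_const).continuousWithinAt
  rw [slopeRhoF_eq_limsup_ofReal_sub]
  exact (ofReal_leftDeriv_mul_limsup_le_limsup hφ tendsto_dist _).trans
    (limsup_le_nonlocalPhiSlopeRho φ)

theorem nonlocalPhiSlope_ge_max_general {xbar : X} (hgraph : ybar ∈ F xbar) {φ : ℝ → ℝ} {c : ℝ}
    (hφ : HasDerivWithinAt φ c (Iio (dist p.2 ybar)) (dist p.2 ybar)) (hp : p ≠ (xbar, ybar)) :
    max (ENNReal.ofReal c * slopeRhoF F ybar ρ p)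
        (ENNReal.ofReal (φ (dist p.2 ybar) - φ 0) / ENNReal.ofReal (dRho ρ p (xbar, ybar)))
      ≤ nonlocalPhiSlopeRho F φ ybar ρ p := by
  refine max_le (ofReal_leftDeriv_mul_slopeRhoF_le_nonlocalPhiSlopeRho hφ) ?_
  rw [dRho_comm, ← dist_self ybar]
  exact ofReal_div_dRho_le_nonlocalPhiSlopeRho φ hgraph hp.symm

end Slopes

/-- Proposition 6P3 (i): for `(x,y) ∈ gph F` with `y ≠ ȳ` and `ρ > 0`,
`|∇F|_{φ,ρ}^◇(x,y) ≥ max{φ'(d(y,ȳ))·|∇F|_ρ(x,y), φ(d(y,ȳ))/d_ρ((x,y),(x̄,ȳ))}`. -/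
theorem nonlocalPhiSlope_ge_max {X Y : Type*} [MetricSpace X] [MetricSpace Y]
    (F : X → Set Y) (xbar : X) (ybar : Y)
    (hgraph : ybar ∈ F xbar)
    (φ φ' : ℝ → ℝ) (D : EReal)
    (hφ0 : φ 0 = 0)
    (hφnonneg : ∀ t : ℝ, 0 ≤ t → 0 ≤ φ t)
    (hφc0 : ContinuousWithinAt φ (Set.Ici 0) 0)
    (hderiv : ∀ t : ℝ, 0 < t → HasDerivAt φ (φ' t) t)
    (hφ'pos : ∀ t : ℝ, 0 < t → 0 < φ' t)
    (hφ'cont : ContinuousOn φ' (Set.Ioi 0))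
    (hD : Filter.Tendsto (fun t : ℝ => ((φ' t : ℝ) : EReal)) (𝓝[>] (0:ℝ)) (𝓝 D))
    (hDpos : 0 < D)
    (ρ : ℝ) (hρ : 0 < ρ) (p : X × Y) (hp : p ∈ svGraph F) (hy : p.2 ≠ ybar) :
    max (ENNReal.ofReal (φ' (dist p.2 ybar)) * slopeRhoF F ybar ρ p)
        (ENNReal.ofReal (φ (dist p.2 ybar)) / ENNReal.ofReal (dRho ρ p (xbar, ybar)))
      ≤ nonlocalPhiSlopeRho F φ ybar ρ p := by
  have hφd := (hderiv _ (dist_pos.mpr hy)).hasDerivWithinAt (s := Iio (dist p.2 ybar))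
  simpa only [hφ0, sub_zero] using
    nonlocalPhiSlope_ge_max_general hgraph hφd (ne_of_apply_ne Prod.snd hy)
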